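/- Let t ↦ Z_t be a bounded measurable family of 2d×m real matrices on [0,1] and let s ∈ ℝ∖{0}. A function v in the complexification V_ℂ = {v ∈ L²([0,1];ℂ^m) : ∫₀¹ X_t v(t) dt = 0} satisfies K v = −(1/s)·v if and only if there exists an absolutely continuous η : [0,1] → ℂ^{2d} solving the complexified Jacobi equation η̇(t) = Z_tˢ (Z_tˢ)ᵀ J η(t) for a.e. t, such that the q-components of η(0) and of η(1) are both zero and v(t) = (Z_tˢ)ᵀ J η(t) for a.e. t ∈ [0,1]. -/

import Mathlib

open MeasureTheory Filter Topology Matrix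

noncomputable section

/-- The standard symplectic `2d × 2d` matrix `J = [[0, -I],[I, 0]]`, over `ℂ`. -/
def Jc (d : ℕ) : Matrix (Fin (d + d)) (Fin (d + d)) ℂ :=
  Matrix.reindex finSumFinEquiv finSumFinEquiv (Matrix.fromBlocks 0 (-1) 1 0)

/-- The bottom `d × m` block `X_t` of the block matrix `Z_t = (Y_t; X_t)`. -/
def Xblock {d m : ℕ} (Z : ℝ → Matrix (Fin (d + d)) (Fin m) ℝ) (t : ℝ) :
    Matrix (Fin d) (Fin m) ℝ :=
  Matrix.of fun i j => Z t (finSumFinEquiv (Sum.inr i)) j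

/-- For `Z_t = (Y_t; X_t)`, the complex matrix `Z_tˢ = (s·Y_t; X_t)`. -/
def Zs {d m : ℕ} (Z : ℝ → Matrix (Fin (d + d)) (Fin m) ℝ) (s : ℂ) (t : ℝ) :
    Matrix (Fin (d + d)) (Fin m) ℂ :=
  Matrix.of fun i j => (if (i : ℕ) < d then s else 1) * (Z t i j : ℂ)

/-- Carathéodory solution of the complexified Jacobi equation
`η̇ = Z_tˢ (Z_tˢ)ᵀ J η`, via the equivalent integral equation. -/
def IsJacobiSolutionC {d m : ℕ} (Z : ℝ → Matrix (Fin (d + d)) (Fin m) ℝ) (s : ℂ)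
    (η : ℝ → Fin (d + d) → ℂ) : Prop :=
  ∀ t ∈ Set.Icc (0:ℝ) 1,
    η t = η 0 + ∫ τ in (0:ℝ)..t, (Zs Z s τ * (Zs Z s τ)ᵀ * Jc d).mulVec (η τ)

/-- Entrywise integral of a matrix-valued function over a subset of `ℝ`. -/
def mSetIntegral {n p : Type*} (s : Set ℝ) (f : ℝ → Matrix n p ℝ) : Matrix n p ℝ :=
  Matrix.of fun i j => ∫ t in s, f t i j

/-- Lebesgue measure restricted to `[0,1]`. -/
abbrev μ01 : Measure ℝ := volume.restrict (Set.Icc (0 : ℝ) 1)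

/-- `L²([0,1]; ℂᵐ)`. -/
abbrev L2mC (m : ℕ) := Lp (EuclideanSpace ℂ (Fin m)) 2 μ01

/-!
Put `F(t) = ∫₀ᵗ Z v`. Integration by parts gives `⟨K v, w⟩ = -∫ (Zᵀ J F) ⬝ w` for `v, w ∈ V`: the
boundary term is the symplectic product of the endpoints of the curves driven by `v` and `w`, and
both lie in the Lagrangian subspace `q = 0`. Since `V` is cut out by the rows of `X`, the Lagrange
multiplier rule turns `K v = -(1/s) v` into `v = s Zᵀ J F + Xᵀ p` for some constant `p ∈ ℂᵈ`. The
multiplier `p` is the initial momentum: with `S (p, q) = (s p, q)`, so that `Zˢ = S Z`, the curve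
`η = (p, 0) + S F` satisfies `(Zˢ)ᵀ J η = s Zᵀ J F + Xᵀ p`. Hence the condition reads
`v = (Zˢ)ᵀ J η`, and then `η̇ = S Z v = Zˢ v` is the Jacobi equation. The endpoint condition
`q(1) = 0` is the membership of `v` in `V`.
-/

section CumulativeIntegral

variable {α 𝕜 E F G : Type*} [MeasurableSpace α]
  [NormedAddCommGroup E] [NormedSpace ℝ E] [NormedAddCommGroup F] [NormedSpace ℝ F]
  [NormedAddCommGroup G] [NormedSpace ℝ G] {μ : Measure α}

lemma setIntegral_prod_eq_integral_setIntegral {β : Type*} [MeasurableSpace β] {ν : Measure β}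
    [SFinite μ] [SFinite ν]
    {h : α × β → E} (hh : Integrable h (μ.prod ν)) {s : Set (α × β)} (hs : MeasurableSet s) :
    ∫ z in s, h z ∂μ.prod ν = ∫ x, ∫ y in Prod.mk x ⁻¹' s, h (x, y) ∂ν ∂μ := by
  rw [← integral_indicator hs, integral_prod _ (hh.indicator hs)]
  refine integral_congr_ae (.of_forall fun x ↦ ?_)
  exact integral_indicator (hs.preimage measurable_prodMk_left)

/-- The primitive `t ↦ ∫_{τ ≤ t} f dμ`. For `μ01` it is, on `[0,1]`, the primitive that vanishes at
`0`. -/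
def cumIntegral [Preorder α] (μ : Measure α) (f : α → E) (t : α) : E := ∫ τ in Set.Iic t, f τ ∂μ

variable [LinearOrder α] [TopologicalSpace α] [OrderClosedTopology α]
  [SecondCountableTopology α] [OpensMeasurableSpace α] [SFinite μ]

lemma memLp_top_cumIntegral {f : α → E} (hf : Integrable f μ) : MemLp (cumIntegral μ f) ⊤ μ := by
  have hle : MeasurableSet {z : α × α | z.2 ≤ z.1} := measurableSet_le measurable_snd measurable_fst
  have hmeas : AEStronglyMeasurable (cumIntegral μ f) μ := by
    refine (hf.1.comp_snd.indicator hle).integral_prod_right'.congr (.of_forall fun t ↦ ?_)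
    exact integral_indicator measurableSet_Iic
  refine memLp_top_of_bound hmeas (∫ τ, ‖f τ‖ ∂μ) (.of_forall fun t ↦ ?_)
  exact (norm_integral_le_integral_norm f).trans
    (setIntegral_le_integral hf.norm (.of_forall fun τ ↦ norm_nonneg _))

variable [RCLike 𝕜] [NormedSpace 𝕜 E] [NormedSpace 𝕜 F] [NormedSpace 𝕜 G]
  [CompleteSpace E] [CompleteSpace F] [CompleteSpace G] [NullSingletonClass μ]

theorem integral_bilin_cumIntegral_add_integral_cumIntegral_bilin (B : E →L[𝕜] F →L[𝕜] G)
    {f : α → E} {g : α → F} (hf : Integrable f μ) (hg : Integrable g μ) :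
    (∫ t, B (f t) (cumIntegral μ g t) ∂μ) + ∫ t, B (cumIntegral μ f t) (g t) ∂μ =
      B (∫ t, f t ∂μ) (∫ t, g t ∂μ) := by
  have hint : Integrable (fun z : α × α ↦ B (f z.1) (g z.2)) (μ.prod μ) :=
    hf.op_fst_snd (by fun_prop) ⟨‖B‖, B.le_opNorm₂⟩ hg
  have hle : MeasurableSet {z : α × α | z.2 ≤ z.1} := measurableSet_le measurable_snd measurable_fst
  have hbelow : ∫ t, B (f t) (cumIntegral μ g t) ∂μ =
      ∫ z in {z : α × α | z.2 ≤ z.1}, B (f z.1) (g z.2) ∂μ.prod μ := by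
    rw [setIntegral_prod_eq_integral_setIntegral hint hle]
    refine integral_congr_ae (.of_forall fun t ↦ ?_)
    exact ((B (f t)).integral_comp_comm hg.integrableOn).symm
  have habove : ∫ t, B (cumIntegral μ f t) (g t) ∂μ =
      ∫ z in {z : α × α | z.2 ≤ z.1}ᶜ, B (f z.1) (g z.2) ∂μ.prod μ := by
    rw [← integral_indicator hle.compl, integral_prod_symm _ (hint.indicator hle.compl)]
    refine integral_congr_ae (.of_forall fun t ↦ ?_)
    have hIio : ∫ τ in Set.Iio t, B (f τ) (g t) ∂μ = ∫ τ in Set.Iic t, B (f τ) (g t) ∂μ :=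
      setIntegral_congr_set Iio_ae_eq_Iic
    calc B (cumIntegral μ f t) (g t) = ∫ τ in Set.Iic t, B (f τ) (g t) ∂μ :=
          ((B.flip (g t)).integral_comp_comm hf.integrableOn).symm
      _ = ∫ τ in Set.Iio t, B (f τ) (g t) ∂μ := hIio.symm
      _ = _ := by
        rw [← integral_indicator measurableSet_Iio]
        refine integral_congr_ae (.of_forall fun τ ↦ ?_)
        by_cases h : τ < t <;> simp [Set.indicator, h]
  rw [hbelow, habove, integral_add_compl hle hint, integral_prod_bilin B hf hg]

end CumulativeIntegral

section Pairing

variable {α 𝕜 ι : Type*} [MeasurableSpace α] [RCLike 𝕜] [Fintype ι] {μ : Measure α}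

/-- The dot product as a continuous bilinear (not sesquilinear) map on Euclidean space. -/
def dotProductCLM (𝕜 ι : Type*) [RCLike 𝕜] [Fintype ι] :
    EuclideanSpace 𝕜 ι →L[𝕜] EuclideanSpace 𝕜 ι →L[𝕜] 𝕜 :=
  ((dotProductBilin 𝕜 𝕜).compl₁₂ (WithLp.linearEquiv 2 𝕜 (ι → 𝕜)).toLinearMap
    (WithLp.linearEquiv 2 𝕜 (ι → 𝕜)).toLinearMap).toContinuousBilinearMap

/-- The bilinear pairing `∫ u ⬝ᵥ w dμ` of `L²` functions, without complex conjugation: the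
complexification of the real inner product, for which the form of `K` is complex bilinear. -/
def dotPairing (μ : Measure α) :
    Lp (EuclideanSpace 𝕜 ι) 2 μ →L[𝕜] Lp (EuclideanSpace 𝕜 ι) 2 μ →L[𝕜] 𝕜 :=
  (dotProductCLM 𝕜 ι).lpPairing μ 2 2

lemma dotPairing_apply (u w : Lp (EuclideanSpace 𝕜 ι) 2 μ) :
    dotPairing μ u w = ∫ t, u t ⬝ᵥ w t ∂μ :=
  (dotProductCLM 𝕜 ι).lpPairing_eq_integral u w

lemma memLp_toLp {p : ENNReal} {f : α → ι → 𝕜} (hf : MemLp f p μ) :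
    MemLp (fun t ↦ (WithLp.toLp 2 (f t) : EuclideanSpace 𝕜 ι)) p μ :=
  .of_eval_piLp (memLp_pi_iff.1 hf)

/-- The `Lᵖ` class of a function with values in `ι → 𝕜` (which carries the sup norm), viewed in
Euclidean space. -/
def euclideanLp {p : ENNReal} (f : α → ι → 𝕜) (hf : MemLp f p μ) : Lp (EuclideanSpace 𝕜 ι) p μ :=
  (memLp_toLp hf).toLp

lemma coeFn_euclideanLp {p : ENNReal} {f : α → ι → 𝕜} (hf : MemLp f p μ) :
    ∀ᵐ t ∂μ, (euclideanLp f hf t).ofLp = f t := by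
  filter_upwards [(memLp_toLp hf).coeFn_toLp] with t ht
  rw [euclideanLp, ht]

lemma memLp_ofLp {p : ENNReal} (u : Lp (EuclideanSpace 𝕜 ι) p μ) :
    MemLp (fun t ↦ (u t).ofLp) p μ :=
  memLp_pi_iff.2 (Lp.memLp u).eval_piLp

theorem inner_eq_dotPairing_of_isSelfAdjoint {x : Lp (EuclideanSpace 𝕜 ι) 2 μ}
    (hx : ∀ᵐ t ∂μ, IsSelfAdjoint (x t).ofLp) (u : Lp (EuclideanSpace 𝕜 ι) 2 μ) :
    inner 𝕜 x u = dotPairing μ x u := by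
  rw [L2.inner_def, dotPairing_apply]
  refine integral_congr_ae (hx.mono fun t ht ↦ ?_)
  dsimp only
  rw [EuclideanSpace.inner_eq_star_dotProduct, ht.star_eq, dotProduct_comm]

theorem dotPairing_eq_zero_iff {u : Lp (EuclideanSpace 𝕜 ι) 2 μ} :
    dotPairing μ u = 0 ↔ u = 0 := by
  refine ⟨fun h ↦ ?_, fun h ↦ by simp [h]⟩
  have hstar : MemLp (fun t ↦ star (u t).ofLp) 2 μ := (memLp_ofLp u).star
  have hself : inner 𝕜 u u = dotPairing μ u (euclideanLp _ hstar) := by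
    rw [L2.inner_def, dotPairing_apply]
    refine integral_congr_ae ((coeFn_euclideanLp hstar).mono fun t ht ↦ ?_)
    dsimp only
    rw [EuclideanSpace.inner_eq_star_dotProduct, ht]
  rwa [h, _root_.zero_apply, inner_self_eq_zero] at hself

theorem mem_span_range_iff_exists_ae_eq_sum {E κ : Type*} [NormedAddCommGroup E]
    [NormedSpace 𝕜 E] [Fintype κ] {p : ENNReal} {x : κ → Lp E p μ} {u : Lp E p μ} :
    u ∈ Submodule.span 𝕜 (Set.range x) ↔ ∃ c : κ → 𝕜, ∀ᵐ t ∂μ, u t = ∑ i, c i • x i t := by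
  rw [Submodule.mem_span_range_iff_exists_fun]
  refine exists_congr fun c ↦ ?_
  have hsum : ∀ᵐ t ∂μ, (∑ i, c i • x i : Lp E p μ) t = ∑ i, c i • x i t := by
    filter_upwards [Lp.coeFn_finsetSum Finset.univ fun i ↦ c i • x i,
      ae_all_iff.2 fun i ↦ Lp.coeFn_smul (c i) (x i)] with t ht hsmul
    rw [ht, Finset.sum_apply]
    exact Finset.sum_congr rfl fun i _ ↦ hsmul i
  rw [eq_comm, Lp.ext_iff]
  exact eventually_congr (hsum.mono fun t ht ↦ by rw [ht])

theorem mem_span_of_forall_dotPairing_eq_zero {κ : Type*} [Finite κ]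
    {x : κ → Lp (EuclideanSpace 𝕜 ι) 2 μ} {u : Lp (EuclideanSpace 𝕜 ι) 2 μ}
    (h : ∀ w, (∀ i, dotPairing μ (x i) w = 0) → dotPairing μ u w = 0) :
    u ∈ Submodule.span 𝕜 (Set.range x) := by
  have := Fintype.ofFinite κ
  have hdual : (dotPairing μ u).toLinearMap ∈
      Submodule.span 𝕜 (Set.range fun i ↦ (dotPairing μ (x i)).toLinearMap) :=
    mem_span_of_iInf_ker_le_ker fun w hw ↦ h w (by simpa using hw)
  obtain ⟨c, hc⟩ := (Submodule.mem_span_range_iff_exists_fun 𝕜).1 hdual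
  have hu : u - ∑ i, c i • x i = 0 := by
    rw [← dotPairing_eq_zero_iff]
    ext w
    simpa [sub_eq_zero] using (LinearMap.congr_fun hc w).symm
  exact (Submodule.mem_span_range_iff_exists_fun 𝕜).2 ⟨c, (sub_eq_zero.1 hu).symm⟩

/- For real `x i` the bilinear annihilator of the span is its orthogonal complement. -/
theorem eq_zero_of_mem_span_of_forall_dotPairing_eq_zero {κ : Type*}
    {x : κ → Lp (EuclideanSpace 𝕜 ι) 2 μ} (hx : ∀ i, ∀ᵐ t ∂μ, IsSelfAdjoint (x i t).ofLp)
    {u : Lp (EuclideanSpace 𝕜 ι) 2 μ} (hmem : u ∈ Submodule.span 𝕜 (Set.range x))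
    (hu : ∀ i, dotPairing μ (x i) u = 0) : u = 0 := by
  have horth : Submodule.span 𝕜 (Set.range x) ≤ (𝕜 ∙ u)ᗮ := by
    rw [Submodule.span_le, Set.range_subset_iff]
    intro i
    rw [SetLike.mem_coe, Submodule.mem_orthogonal_singleton_iff_inner_left,
      inner_eq_dotPairing_of_isSelfAdjoint (hx i), hu]
  exact inner_self_eq_zero.1 (Submodule.mem_orthogonal_singleton_iff_inner_left.1 (horth hmem))

theorem eq_iff_sub_mem_span_of_dotPairing_eq {κ : Type*} [Finite κ]
    {x : κ → Lp (EuclideanSpace 𝕜 ι) 2 μ} (hx : ∀ i, ∀ᵐ t ∂μ, IsSelfAdjoint (x i t).ofLp)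
    {f u y : Lp (EuclideanSpace 𝕜 ι) 2 μ} (hu : ∀ i, dotPairing μ (x i) u = 0)
    (hy : ∀ i, dotPairing μ (x i) y = 0)
    (hfu : ∀ w, (∀ i, dotPairing μ (x i) w = 0) → dotPairing μ u w = dotPairing μ f w) :
    u = y ↔ f - y ∈ Submodule.span 𝕜 (Set.range x) := by
  have hmem : f - u ∈ Submodule.span 𝕜 (Set.range x) :=
    mem_span_of_forall_dotPairing_eq_zero fun w hw ↦ by simp [hfu w hw]
  refine ⟨fun h ↦ h ▸ hmem, fun h ↦ sub_eq_zero.1 ?_⟩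
  refine eq_zero_of_mem_span_of_forall_dotPairing_eq_zero hx ?_ fun i ↦ by simp [hu, hy]
  simpa using Submodule.sub_mem _ h hmem

end Pairing

section MatrixFamily

variable {α 𝕜 ι n : Type*} [MeasurableSpace α] [RCLike 𝕜] [Fintype ι] [Fintype n] {μ : Measure α}

lemma memLp_mulVec {p q r : ENNReal} [p.HolderTriple q r] {A : α → Matrix n ι 𝕜}
    (hA : ∀ i j, MemLp (fun t ↦ A t i j) p μ) {v : α → ι → 𝕜} (hv : MemLp v q μ) :
    MemLp (fun t ↦ A t *ᵥ v t) r μ :=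
  memLp_pi_iff.2 fun i ↦ memLp_finsetSum _ fun j _ ↦ (memLp_pi_iff.1 hv j).mul (hA i j)

lemma integral_mulVec (M : Matrix n ι 𝕜) {f : α → ι → 𝕜} (hf : Integrable f μ) :
    ∫ t, M *ᵥ f t ∂μ = M *ᵥ ∫ t, f t ∂μ :=
  M.mulVecLin.toContinuousLinearMap.integral_comp_comm hf

theorem integral_mulVec_dotProduct_cumIntegral_add [LinearOrder α] [TopologicalSpace α]
    [OrderClosedTopology α] [SecondCountableTopology α] [OpensMeasurableSpace α]
    [SFinite μ] [NullSingletonClass μ]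
    (M : Matrix n ι 𝕜) {f : α → ι → 𝕜} {g : α → n → 𝕜}
    (hf : Integrable f μ) (hg : Integrable g μ) :
    (∫ t, M *ᵥ f t ⬝ᵥ cumIntegral μ g t ∂μ) + ∫ t, M *ᵥ cumIntegral μ f t ⬝ᵥ g t ∂μ =
      M *ᵥ (∫ t, f t ∂μ) ⬝ᵥ ∫ t, g t ∂μ :=
  integral_bilin_cumIntegral_add_integral_cumIntegral_bilin
    ((dotProductBilin 𝕜 𝕜).comp M.mulVecLin).toContinuousBilinearMap hf hg

end MatrixFamily

section Symplectic

variable {d m : ℕ} {Z : ℝ → Matrix (Fin (d + d)) (Fin m) ℝ}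

lemma Jc_mulVec_castAdd (x : Fin (d + d) → ℂ) (i : Fin d) :
    (Jc d *ᵥ x) (Fin.castAdd d i) = -x (Fin.natAdd d i) := by
  simp [Jc, mulVec, dotProduct, Fin.sum_univ_add, one_apply, -Fin.natAdd_eq_addNat]

lemma Jc_mulVec_natAdd (x : Fin (d + d) → ℂ) (i : Fin d) :
    (Jc d *ᵥ x) (Fin.natAdd d i) = x (Fin.castAdd d i) := by
  simp [Jc, mulVec, dotProduct, Fin.sum_univ_add, one_apply, -Fin.natAdd_eq_addNat]

lemma Jc_mulVec_dotProduct_eq_zero {x y : Fin (d + d) → ℂ}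
    (hx : ∀ i, x (Fin.natAdd d i) = 0) (hy : ∀ i, y (Fin.natAdd d i) = 0) :
    Jc d *ᵥ x ⬝ᵥ y = 0 := by
  simp [dotProduct, Fin.sum_univ_add, Jc_mulVec_castAdd, hx, hy, -Fin.natAdd_eq_addNat]

/-- The linear map `(p, q) ↦ (s p, q)`, by which `Zˢ` is obtained from `Z`. -/
def momentumScaling (d : ℕ) (s : ℂ) : Matrix (Fin (d + d)) (Fin (d + d)) ℂ :=
  diagonal fun i ↦ if (i : ℕ) < d then s else 1

lemma Zs_eq_momentumScaling_mul (s : ℂ) (t : ℝ) :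
    Zs Z s t = momentumScaling d s * (Z t).map Complex.ofReal := by
  ext i j
  simp [Zs, momentumScaling]

lemma momentumScaling_mulVec_castAdd (s : ℂ) (x : Fin (d + d) → ℂ) (i : Fin d) :
    (momentumScaling d s *ᵥ x) (Fin.castAdd d i) = s * x (Fin.castAdd d i) := by
  simp [momentumScaling, mulVec_diagonal]

lemma momentumScaling_mulVec_natAdd (s : ℂ) (x : Fin (d + d) → ℂ) (i : Fin d) :
    (momentumScaling d s *ᵥ x) (Fin.natAdd d i) = x (Fin.natAdd d i) := by
  simp [momentumScaling, mulVec_diagonal]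

lemma momentumScaling_mulVec_Jc_mulVec_append_add (s : ℂ) (x : Fin (d + d) → ℂ)
    (p : Fin d → ℂ) :
    momentumScaling d s *ᵥ (Jc d *ᵥ (Fin.append p 0 + momentumScaling d s *ᵥ x)) =
      s • (Jc d *ᵥ x) + Fin.append 0 p := by
  refine funext (Fin.addCases (fun i ↦ ?_) fun i ↦ ?_) <;>
    simp [momentumScaling_mulVec_castAdd, momentumScaling_mulVec_natAdd, Jc_mulVec_castAdd,
      Jc_mulVec_natAdd, -Fin.natAdd_eq_addNat, -mulVec_mulVec, mulVec_add, add_comm]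

lemma map_transpose_mulVec_append_zero (t : ℝ) (p : Fin d → ℂ) :
    ((Z t).map Complex.ofReal)ᵀ *ᵥ Fin.append 0 p =
      ((Xblock Z t).map Complex.ofReal)ᵀ *ᵥ p := by
  ext j
  simp [mulVec, dotProduct, Fin.sum_univ_add, Xblock, -Fin.natAdd_eq_addNat]

lemma Zs_transpose_mul_Jc_mulVec (s : ℂ) (t : ℝ) (x : Fin (d + d) → ℂ) (p : Fin d → ℂ) :
    ((Zs Z s t)ᵀ * Jc d) *ᵥ (Fin.append p 0 + momentumScaling d s *ᵥ x) =
      s • (((Z t).map Complex.ofReal)ᵀ *ᵥ (Jc d *ᵥ x)) +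
        ((Xblock Z t).map Complex.ofReal)ᵀ *ᵥ p := by
  have hsymm : (momentumScaling d s)ᵀ = momentumScaling d s := diagonal_transpose _
  rw [Zs_eq_momentumScaling_mul, transpose_mul, hsymm, ← mulVec_mulVec, ← mulVec_mulVec,
    momentumScaling_mulVec_Jc_mulVec_append_add, mulVec_add, mulVec_smul,
    map_transpose_mulVec_append_zero]

end Symplectic

section Jacobi

variable {d m : ℕ} {Z : ℝ → Matrix (Fin (d + d)) (Fin m) ℝ}

lemma cumIntegral_μ01 {E : Type*} [NormedAddCommGroup E] [NormedSpace ℝ E] (f : ℝ → E) {t : ℝ}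
    (ht : t ∈ Set.Icc (0 : ℝ) 1) : cumIntegral μ01 f t = ∫ τ in Set.Icc 0 t, f τ := by
  have hset : Set.Iic t ∩ Set.Icc 0 1 = Set.Icc 0 t := by grind
  rw [cumIntegral, Measure.restrict_restrict measurableSet_Iic, hset]

/-- The curve `F(t) = ∫₀ᵗ Z v` in phase space driven by the control `v`. -/
def drivenCurve (Z : ℝ → Matrix (Fin (d + d)) (Fin m) ℝ) (v : L2mC m) :
    ℝ → Fin (d + d) → ℂ :=
  cumIntegral μ01 fun τ ↦ (Z τ).map Complex.ofReal *ᵥ v τ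

lemma drivenCurve_eq_setIntegral (v : L2mC m) {t : ℝ} (ht : t ∈ Set.Icc (0 : ℝ) 1) :
    drivenCurve Z v t = ∫ τ in Set.Icc 0 t, (Z τ).map Complex.ofReal *ᵥ v τ :=
  cumIntegral_μ01 _ ht

lemma drivenCurve_zero (v : L2mC m) : drivenCurve Z v 0 = 0 := by
  simp [drivenCurve_eq_setIntegral]

lemma drivenCurve_one (v : L2mC m) :
    drivenCurve Z v 1 = ∫ t, (Z t).map Complex.ofReal *ᵥ v t ∂μ01 :=
  drivenCurve_eq_setIntegral v (by simp)

variable (hZ : ∀ i j, MemLp (fun t ↦ Z t i j) 2 μ01)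
include hZ

lemma memLp_map_ofReal (i : Fin (d + d)) (j : Fin m) :
    MemLp (fun t ↦ (Z t).map Complex.ofReal i j) 2 μ01 :=
  (hZ i j).ofReal

lemma integrable_map_ofReal_mulVec (v : L2mC m) :
    Integrable (fun t ↦ (Z t).map Complex.ofReal *ᵥ v t) μ01 :=
  memLp_one_iff_integrable.1 (memLp_mulVec (memLp_map_ofReal hZ) (memLp_ofLp v))

lemma memLp_transpose_mulVec_Jc_drivenCurve (v : L2mC m) :
    MemLp (fun t ↦ ((Z t).map Complex.ofReal)ᵀ *ᵥ (Jc d *ᵥ drivenCurve Z v t)) 2 μ01 := by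
  have hcurve : MemLp (drivenCurve Z v) ⊤ μ01 :=
    memLp_top_cumIntegral (integrable_map_ofReal_mulVec hZ v)
  have hJcurve : MemLp (fun t ↦ Jc d *ᵥ drivenCurve Z v t) ⊤ μ01 :=
    memLp_mulVec (p := ⊤) (q := ⊤) (fun i j ↦ memLp_top_const _) hcurve
  exact memLp_mulVec (fun i j ↦ memLp_map_ofReal hZ j i) hJcurve

/-- The function `Zᵀ J F`, where `F` is the curve driven by `v`: up to sign, the unprojected value
of `K` at `v`. -/
def adjointCurve (v : L2mC m) : L2mC m :=
  euclideanLp _ (memLp_transpose_mulVec_Jc_drivenCurve hZ v)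

lemma coeFn_adjointCurve (v : L2mC m) :
    ∀ᵐ t ∂μ01, (adjointCurve hZ v t).ofLp =
      ((Z t).map Complex.ofReal)ᵀ *ᵥ (Jc d *ᵥ drivenCurve Z v t) :=
  coeFn_euclideanLp _

lemma memLp_Xblock_map_ofReal (i : Fin d) :
    MemLp (fun t ↦ (Xblock Z t).map Complex.ofReal i) 2 μ01 :=
  memLp_pi_iff.2 fun j ↦ memLp_map_ofReal hZ (Fin.natAdd d i) j

/-- The `i`-th row of `X` as an element of `L²`; these rows are the constraints defining `V`. -/
def xRow (i : Fin d) : L2mC m :=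
  euclideanLp _ (memLp_Xblock_map_ofReal hZ i)

lemma coeFn_xRow (i : Fin d) :
    ∀ᵐ t ∂μ01, (xRow hZ i t).ofLp = (Xblock Z t).map Complex.ofReal i :=
  coeFn_euclideanLp _

lemma isSelfAdjoint_xRow (i : Fin d) :
    ∀ᵐ t ∂μ01, IsSelfAdjoint (xRow hZ i t).ofLp := by
  filter_upwards [coeFn_xRow hZ i] with t ht
  rw [ht]
  exact funext fun j ↦ Complex.conj_ofReal _

lemma dotPairing_xRow (i : Fin d) (v : L2mC m) :
    dotPairing μ01 (xRow hZ i) v = ∫ t, ((Xblock Z t).map Complex.ofReal *ᵥ v t) i ∂μ01 := by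
  rw [dotPairing_apply]
  refine integral_congr_ae ((coeFn_xRow hZ i).mono fun t ht ↦ ?_)
  dsimp only
  rw [ht, mulVec]

lemma integral_Xblock_mulVec_eq_zero_iff (v : L2mC m) :
    ∫ t, (Xblock Z t).map Complex.ofReal *ᵥ v t ∂μ01 = 0 ↔
      ∀ i, dotPairing μ01 (xRow hZ i) v = 0 := by
  have hint : Integrable (fun t ↦ (Xblock Z t).map Complex.ofReal *ᵥ v t) μ01 :=
    memLp_one_iff_integrable.1 (memLp_mulVec
      (fun i ↦ memLp_pi_iff.1 (memLp_Xblock_map_ofReal hZ i)) (memLp_ofLp v))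
  simp only [funext_iff, eval_integral (integrable_pi_iff.1 hint), dotPairing_xRow, Pi.zero_apply]

lemma drivenCurve_one_natAdd (v : L2mC m) (i : Fin d) :
    drivenCurve Z v 1 (Fin.natAdd d i) = dotPairing μ01 (xRow hZ i) v := by
  rw [drivenCurve_one, eval_integral (Integrable.eval (integrable_map_ofReal_mulVec hZ v)),
    dotPairing_xRow]
  rfl

lemma mem_span_range_xRow_iff {u : L2mC m} :
    u ∈ Submodule.span ℂ (Set.range (xRow hZ)) ↔
      ∃ c : Fin d → ℂ, ∀ᵐ t ∂μ01, (u t).ofLp = ((Xblock Z t).map Complex.ofReal)ᵀ *ᵥ c := by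
  rw [mem_span_range_iff_exists_ae_eq_sum]
  refine exists_congr fun c ↦ eventually_congr ((ae_all_iff.2 (coeFn_xRow hZ)).mono fun t ht ↦ ?_)
  rw [← (WithLp.ofLp_injective 2).eq_iff, WithLp.ofLp_sum]
  simp only [WithLp.ofLp_smul, ht, mulVec_transpose, vecMul_eq_sum]

lemma sub_smul_adjointCurve_mem_span_range_xRow_iff {s : ℂ} {v : L2mC m} :
    v - s • adjointCurve hZ v ∈ Submodule.span ℂ (Set.range (xRow hZ)) ↔
      ∃ p : Fin d → ℂ, ∀ᵐ t ∂μ01, (v t).ofLp =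
        s • (((Z t).map Complex.ofReal)ᵀ *ᵥ (Jc d *ᵥ drivenCurve Z v t)) +
          ((Xblock Z t).map Complex.ofReal)ᵀ *ᵥ p := by
  rw [mem_span_range_xRow_iff]
  refine exists_congr fun p ↦ eventually_congr ?_
  filter_upwards [Lp.coeFn_sub v (s • adjointCurve hZ v), Lp.coeFn_smul s (adjointCurve hZ v),
    coeFn_adjointCurve hZ v] with t hsub hsmul hadjoint
  rw [hsub, Pi.sub_apply, hsmul, Pi.smul_apply, WithLp.ofLp_sub, WithLp.ofLp_smul, hadjoint,
    sub_eq_iff_eq_add']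

theorem integral_Jc_mulVec_dotProduct_eq_dotPairing_adjointCurve {v w : L2mC m}
    (hv : ∀ i, dotPairing μ01 (xRow hZ i) v = 0) (hw : ∀ i, dotPairing μ01 (xRow hZ i) w = 0) :
    ∫ t in Set.Icc (0 : ℝ) 1, Jc d *ᵥ ((Z t).map Complex.ofReal *ᵥ v t) ⬝ᵥ
        ∫ τ in Set.Icc (0 : ℝ) t, (Z τ).map Complex.ofReal *ᵥ w τ =
      dotPairing μ01 (-adjointCurve hZ v) w := by
  have hboundary : Jc d *ᵥ drivenCurve Z v 1 ⬝ᵥ drivenCurve Z w 1 = 0 :=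
    Jc_mulVec_dotProduct_eq_zero (fun i ↦ by rw [drivenCurve_one_natAdd hZ, hv])
      fun i ↦ by rw [drivenCurve_one_natAdd hZ, hw]
  have hadjoint : ∫ t, Jc d *ᵥ drivenCurve Z v t ⬝ᵥ ((Z t).map Complex.ofReal *ᵥ w t) ∂μ01 =
      dotPairing μ01 (adjointCurve hZ v) w := by
    rw [dotPairing_apply]
    refine integral_congr_ae ((coeFn_adjointCurve hZ v).mono fun t ht ↦ ?_)
    dsimp only
    rw [ht, mulVec_transpose, dotProduct_mulVec]
  have hparts : (∫ t, Jc d *ᵥ ((Z t).map Complex.ofReal *ᵥ v t) ⬝ᵥ drivenCurve Z w t ∂μ01) +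
      ∫ t, Jc d *ᵥ drivenCurve Z v t ⬝ᵥ ((Z t).map Complex.ofReal *ᵥ w t) ∂μ01 = 0 := by
    rw [← hboundary, drivenCurve_one, drivenCurve_one]
    exact integral_mulVec_dotProduct_cumIntegral_add (Jc d)
      (integrable_map_ofReal_mulVec hZ v) (integrable_map_ofReal_mulVec hZ w)
  rw [map_neg, _root_.neg_apply, ← hadjoint, ← eq_neg_of_add_eq_zero_left hparts]
  exact setIntegral_congr_fun measurableSet_Icc fun t ht ↦ by
    dsimp only
    rw [drivenCurve_eq_setIntegral w ht]

lemma integral_Zs_mul_transpose_mul_Jc_mulVec {s : ℂ} {v : L2mC m} {η : ℝ → Fin (d + d) → ℂ}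
    (hη : ∀ᵐ t ∂μ01, (v t).ofLp = ((Zs Z s t)ᵀ * Jc d) *ᵥ η t) {t : ℝ}
    (ht : t ∈ Set.Icc (0 : ℝ) 1) :
    ∫ τ in (0 : ℝ)..t, (Zs Z s τ * (Zs Z s τ)ᵀ * Jc d) *ᵥ η τ =
      momentumScaling d s *ᵥ drivenCurve Z v t := by
  have hsub : Set.Icc 0 t ⊆ Set.Icc (0 : ℝ) 1 := Set.Icc_subset_Icc_right ht.2
  rw [drivenCurve_eq_setIntegral v ht, intervalIntegral.integral_of_le ht.1,
    ← integral_Icc_eq_integral_Ioc,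
    ← integral_mulVec _ (IntegrableOn.mono_set (integrable_map_ofReal_mulVec hZ v) hsub)]
  refine integral_congr_ae ((ae_restrict_of_ae_restrict_of_subset hsub hη).mono fun τ hτ ↦ ?_)
  dsimp only
  rw [hτ, mulVec_mulVec, mulVec_mulVec, ← Zs_eq_momentumScaling_mul, Matrix.mul_assoc]

lemma isJacobiSolutionC_iff_eq_add {s : ℂ} {v : L2mC m} {η : ℝ → Fin (d + d) → ℂ}
    (hη : ∀ᵐ t ∂μ01, (v t).ofLp = ((Zs Z s t)ᵀ * Jc d) *ᵥ η t) :
    IsJacobiSolutionC Z s η ↔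
      ∀ t ∈ Set.Icc (0 : ℝ) 1, η t = η 0 + momentumScaling d s *ᵥ drivenCurve Z v t :=
  forall₂_congr fun t ht ↦ by rw [integral_Zs_mul_transpose_mul_Jc_mulVec hZ hη ht]

theorem exists_isJacobiSolutionC_iff (s : ℂ) {v : L2mC m}
    (hv : ∀ i, drivenCurve Z v 1 (Fin.natAdd d i) = 0) :
    (∃ η : ℝ → Fin (d + d) → ℂ, IsJacobiSolutionC Z s η ∧
      (∀ i, η 0 (Fin.natAdd d i) = 0) ∧ (∀ i, η 1 (Fin.natAdd d i) = 0) ∧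
      ∀ᵐ t ∂μ01, (v t).ofLp = ((Zs Z s t)ᵀ * Jc d) *ᵥ η t) ↔
    ∃ p : Fin d → ℂ, ∀ᵐ t ∂μ01, (v t).ofLp =
      s • (((Z t).map Complex.ofReal)ᵀ *ᵥ (Jc d *ᵥ drivenCurve Z v t)) +
        ((Xblock Z t).map Complex.ofReal)ᵀ *ᵥ p := by
  constructor
  · rintro ⟨η, hsol, hη0, -, hη⟩
    obtain ⟨p, hp⟩ : ∃ p : Fin d → ℂ, η 0 = Fin.append p 0 :=
      ⟨fun i ↦ η 0 (Fin.castAdd d i), funext (Fin.addCases (fun i ↦ by rw [Fin.append_left])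
        fun i ↦ by rw [hη0, Fin.append_right, Pi.zero_apply])⟩
    refine ⟨p, ?_⟩
    filter_upwards [hη, ae_restrict_mem measurableSet_Icc] with t hηt ht
    rw [hηt, (isJacobiSolutionC_iff_eq_add hZ hη).1 hsol t ht, hp, Zs_transpose_mul_Jc_mulVec]
  · rintro ⟨p, hp⟩
    let η : ℝ → Fin (d + d) → ℂ := fun t ↦
      Fin.append p 0 + momentumScaling d s *ᵥ drivenCurve Z v t
    have hη : ∀ᵐ t ∂μ01, (v t).ofLp = ((Zs Z s t)ᵀ * Jc d) *ᵥ η t :=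
      hp.mono fun t ht ↦ by rw [ht, Zs_transpose_mul_Jc_mulVec]
    have hη0 : η 0 = Fin.append p 0 := by simp [η, drivenCurve_zero]
    refine ⟨η, (isJacobiSolutionC_iff_eq_add hZ hη).2 fun t _ ↦ by rw [hη0], fun i ↦ ?_,
      fun i ↦ ?_, hη⟩
    · rw [hη0, Fin.append_right, Pi.zero_apply]
    · simp only [η, Pi.add_apply, momentumScaling_mulVec_natAdd, hv, Fin.append_right,
        Pi.zero_apply, zero_add]

end Jacobi

theorem eigenfunction_iff_jacobi_boundary_solution_general {d m : ℕ}
    {Z : ℝ → Matrix (Fin (d + d)) (Fin m) ℝ} (hZ : ∀ i j, MemLp (fun t ↦ Z t i j) 2 μ01)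
    {Vc : Submodule ℂ (L2mC m)}
    (hVc : ∀ v : L2mC m, v ∈ Vc ↔
      ∫ t in Set.Icc (0 : ℝ) 1, (Xblock Z t).map Complex.ofReal *ᵥ v t = 0)
    {Kc : Vc → Vc}
    (hKc : ∀ v w : Vc, ∫ t in Set.Icc (0 : ℝ) 1, (Kc v : L2mC m) t ⬝ᵥ (w : L2mC m) t =
      ∫ t in Set.Icc (0 : ℝ) 1, Jc d *ᵥ ((Z t).map Complex.ofReal *ᵥ (v : L2mC m) t) ⬝ᵥ
        ∫ τ in Set.Icc (0 : ℝ) t, (Z τ).map Complex.ofReal *ᵥ (w : L2mC m) τ)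
    {s : ℂ} (hs : s ≠ 0) (v : Vc) :
    Kc v = (-(1 / s)) • v ↔
      ∃ η : ℝ → Fin (d + d) → ℂ,
        IsJacobiSolutionC Z s η ∧
        (∀ i, η 0 (finSumFinEquiv (Sum.inr i)) = 0) ∧
        (∀ i, η 1 (finSumFinEquiv (Sum.inr i)) = 0) ∧
        ∀ᵐ t ∂μ01, (v : L2mC m) t = ((Zs Z s t)ᵀ * Jc d) *ᵥ η t := by
  have hmem (w : L2mC m) : w ∈ Vc ↔ ∀ i, dotPairing μ01 (xRow hZ i) w = 0 :=
    (hVc w).trans (integral_Xblock_mulVec_eq_zero_iff hZ w)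
  have hv := (hmem v).1 v.2
  have hform (w : L2mC m) (hw : ∀ i, dotPairing μ01 (xRow hZ i) w = 0) :
      dotPairing μ01 (Kc v : L2mC m) w = dotPairing μ01 (-adjointCurve hZ v) w := by
    rw [← integral_Jc_mulVec_dotProduct_eq_dotPairing_adjointCurve hZ hv hw, dotPairing_apply]
    exact hKc v ⟨w, (hmem w).2 hw⟩
  calc Kc v = (-(1 / s)) • v ↔ (Kc v : L2mC m) = (-(1 / s)) • (v : L2mC m) := Subtype.ext_iff
    _ ↔ -adjointCurve hZ v - (-(1 / s)) • (v : L2mC m) ∈ Submodule.span ℂ (Set.range (xRow hZ)) :=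
      eq_iff_sub_mem_span_of_dotPairing_eq (isSelfAdjoint_xRow hZ) ((hmem _).1 (Kc v).2)
        ((hmem _).1 ((-(1 / s)) • v : Vc).2) hform
    _ ↔ (v : L2mC m) - s • adjointCurve hZ v ∈ Submodule.span ℂ (Set.range (xRow hZ)) := by
      rw [← Submodule.smul_mem_iff _ hs, smul_sub, smul_neg, neg_smul, smul_neg, smul_smul,
        mul_one_div_cancel hs, one_smul, neg_sub_neg]
    _ ↔ _ := (sub_smul_adjointCurve_mem_span_range_xRow_iff hZ).trans
      (exists_isJacobiSolutionC_iff hZ s fun i ↦ by rw [drivenCurve_one_natAdd hZ, hv]).symm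

/-- **Eigenfunction characterization (proof of Proposition 5).**
For real `s ≠ 0`, `v ∈ V_ℂ` satisfies `K v = -(1/s) v` iff there is a solution
`η` of the complexified Jacobi equation with vanishing `q`-components at `t = 0`
and `t = 1` such that `v(t) = (Z_tˢ)ᵀ J η(t)` a.e. on `[0,1]`. -/
theorem eigenfunction_iff_jacobi_boundary_solution
    (d m : ℕ) (hd : 0 < d) (hm : 0 < m)
    (Z : ℝ → Matrix (Fin (d + d)) (Fin m) ℝ)
    (hZmeas : ∀ i j, Measurable fun t => Z t i j)
    (hZbdd : ∃ C : ℝ, ∀ t ∈ Set.Icc (0:ℝ) 1, ∀ i j, |Z t i j| ≤ C)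
    (Vc : Submodule ℂ (L2mC m))
    (hVc : ∀ v : L2mC m, v ∈ Vc ↔
      (∫ t in Set.Icc (0:ℝ) 1, ((Xblock Z t).map Complex.ofReal).mulVec (v t)) = 0)
    (Kc : ↥Vc →L[ℂ] ↥Vc)
    (hKc : ∀ v w : ↥Vc,
      (∫ t in Set.Icc (0:ℝ) 1, ((Kc v : L2mC m) t) ⬝ᵥ ((w : L2mC m) t)) =
      ∫ t in Set.Icc (0:ℝ) 1,
        ((Jc d).mulVec (((Z t).map Complex.ofReal).mulVec ((v : L2mC m) t))) ⬝ᵥ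
          (∫ τ in Set.Icc (0:ℝ) t, ((Z τ).map Complex.ofReal).mulVec ((w : L2mC m) τ)))
    (s : ℝ) (hs : s ≠ 0) :
    ∀ v : ↥Vc,
      Kc v = (-(1 / (s : ℂ))) • v ↔
      ∃ η : ℝ → Fin (d + d) → ℂ,
        IsJacobiSolutionC Z (s : ℂ) η ∧
        (∀ i, η 0 (finSumFinEquiv (Sum.inr i)) = 0) ∧
        (∀ i, η 1 (finSumFinEquiv (Sum.inr i)) = 0) ∧
        (∀ᵐ t ∂μ01, (v : L2mC m) t = ((Zs Z (s : ℂ) t)ᵀ * Jc d).mulVec (η t)) := by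
  obtain ⟨C, hC⟩ := hZbdd
  exact eigenfunction_iff_jacobi_boundary_solution_general
    (fun i j ↦ .of_bound (hZmeas i j).aestronglyMeasurable C
      (ae_restrict_of_forall_mem measurableSet_Icc fun t ht ↦ hC t ht i j))
    hVc hKc (Complex.ofReal_ne_zero.2 hs)

end
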